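/- arXiv:2110.07591 — 2 statements merged into one kernel-verified Lean document; each statement's English description precedes it below -/
import Mathlib

section
/- (Vanishing of χ_{π,l} for l = 0.) Let n ≥ 1 and let π be a Dyck path given by a nondecreasing function h : {1,…,n} → {1,…,n} with h(i) ≥ i, with region D(π) = {(i,j) : i < j ≤ h(i)}. Then for every label b₀ : {1,…,n} → ℕ_{≥1}, the following identity holds in ℤ[q]: ∑_b ∑_{t ∈ {0,1}ⁿ} (−1)^{t₁+⋯+tₙ} q^{inv_π(b·t)} = 0, where the outer sum is over all b : {1,…,n} → ℕ_{≥1} that are rearrangements of b₀ (i.e. b = b₀∘σ for some permutation σ of {1,…,n}). In other words, the symmetric function χ_{π,0}[Y;q] vanishes. -/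
/-- `ε` for super letters: a super letter is a pair `(v, s)` with `s = true` meaning
"barred" (negative), ordered by `1 < 1̄ < 2 < 2̄ < ⋯`.  `ε(c,c') = 1` iff `c > c'` or
`c = c'` with `c` negative, which amounts to `c'.1 < c.1` or (`c.1 = c'.1` and `c`
negative). -/
def epsSuper (c c' : ℕ × Bool) : ℕ :=
  if c'.1 < c.1 ∨ (c.1 = c'.1 ∧ c.2 = true) then 1 else 0

/-- The super label `b·t`: `(b·t)ᵢ = bᵢ` (positive) if `tᵢ = 0`, and `bᵢ + N` (barred)
if `tᵢ = 1`, where `N = max(b₁,…,bₙ)`. -/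
def superLabel {n : ℕ} (b : Fin n → ℕ) (t : Fin n → Bool) (i : Fin n) : ℕ × Bool :=
  (if t i then b i + Finset.univ.sup b else b i, t i)

/-- `inv_π(c) = ∑_{(i,j)∈D(π)} ε(cᵢ,cⱼ)`, where the Dyck path `π` is encoded by the
nondecreasing function `h` with `h(i) ≥ i` and `D(π) = {(i,j) : i < j ≤ h(i)}`. -/
def invPi {n : ℕ} (h : Fin n → Fin n) (c : Fin n → ℕ × Bool) : ℕ :=
  ∑ p ∈ Finset.univ.filter (fun p : Fin n × Fin n => p.1 < p.2 ∧ p.2 ≤ h p.1),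
    epsSuper (c p.1) (c p.2)

/-- The number of pairs of `E` leading from `U` to `V`. -/
def edgeCount {n : ℕ} (E : Finset (Fin n × Fin n)) (U V : Finset (Fin n)) : ℕ :=
  ∑ u ∈ U, ∑ v ∈ V, if (u, v) ∈ E then 1 else 0

theorem edgeCount_erase {n : ℕ} {E : Finset (Fin n × Fin n)} {i j : Fin n} (he : (i, j) ∈ E)
    (U V : Finset (Fin n)) :
    edgeCount E U V = edgeCount (E.erase (i, j)) U V + if i ∈ U ∧ j ∈ V then 1 else 0 := by
  have key : ∀ u v, (if (u, v) ∈ E then 1 else 0) =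
      (if (u, v) ∈ E.erase (i, j) then 1 else 0) + if u = i then (if v = j then 1 else 0) else 0 := by
    intro u v
    by_cases hu : u = i <;> by_cases hv : v = j <;> simp [hu, hv, he]
  simp only [edgeCount, key, Finset.sum_add_distrib, add_right_inj]
  have : ∀ u, ∑ v ∈ V, (if u = i then (if v = j then 1 else 0) else 0) =
      if u = i then (if j ∈ V then 1 else 0) else 0 := by
    intro u
    split_ifs <;> simp_all
  simp only [this, Finset.sum_ite_eq', ite_and]

theorem edgeCount_insert_insert {n : ℕ} {E : Finset (Fin n × Fin n)} {i j : Fin n}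
    {U V : Finset (Fin n)} (hiU : i ∉ U) (hjV : j ∉ V) (hUV : Disjoint U V) (he : (i, j) ∉ E)
    (hi : ∀ v ∈ V, (i, v) ∈ E ↔ i < v ∧ v < j) (hj : ∀ u ∈ U, (u, j) ∈ E ↔ i < u ∧ u < j) :
    edgeCount E (insert i U) (insert j V) =
      edgeCount E U V + ((U ∪ V).filter fun m => i < m ∧ m < j).card := by
  have h1 : ∑ v ∈ V, (if (i, v) ∈ E then 1 else 0) = (V.filter fun m => i < m ∧ m < j).card := by
    rw [Finset.card_filter]
    exact Finset.sum_congr rfl fun v hv => by simp only [hi v hv]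
  have h2 : ∑ u ∈ U, (if (u, j) ∈ E then 1 else 0) = (U.filter fun m => i < m ∧ m < j).card := by
    rw [Finset.card_filter]
    exact Finset.sum_congr rfl fun u hu => by simp only [hj u hu]
  rw [Finset.filter_union, Finset.card_union_of_disjoint (Finset.disjoint_filter_filter hUV)]
  simp only [edgeCount, Finset.sum_insert hiU, Finset.sum_insert hjV, Finset.sum_add_distrib,
    he, if_false, h1, h2]
  ring

theorem sum_powerset_ite_mem_notMem {α M : Type*} [DecidableEq α] [AddCommMonoid M]
    {T : Finset α} {i j : α} (hi : i ∈ T) (hij : i ≠ j) (F : Finset α → M) :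
    ∑ A ∈ T.powerset, (if i ∈ A ∧ j ∉ A then F A else 0) =
      ∑ A ∈ ((T.erase i).erase j).powerset, F (insert i A) := by
  rw [← Finset.sum_filter]
  refine Finset.sum_nbij' (fun A => A.erase i) (fun A => insert i A) ?_ ?_ ?_ ?_ ?_
  · intro A hA
    simp only [Finset.mem_filter, Finset.mem_powerset] at hA ⊢
    grind
  · intro A hA
    simp only [Finset.mem_filter, Finset.mem_powerset] at hA ⊢
    grind
  · intro A hA
    simp only [Finset.mem_filter] at hA
    exact Finset.insert_erase hA.2.1
  · intro A hA
    simp only [Finset.mem_powerset] at hA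
    exact Finset.erase_insert fun h => by grind
  · intro A hA
    simp only [Finset.mem_filter] at hA
    rw [Finset.insert_erase hA.2.1]

theorem sum_powerset_edgeCount_compl {n : ℕ} {M : Type*} [AddCommGroup M]
    (E : Finset (Fin n × Fin n)) (hlt : ∀ i j, (i, j) ∈ E → i < j)
    (hmid : ∀ i m j, (i, j) ∈ E → i < m → m < j → (i, m) ∈ E ∧ (m, j) ∈ E)
    (T : Finset (Fin n)) (f : ℕ → ℕ → M) :
    ∑ A ∈ T.powerset, f A.card (edgeCount E A (T \ A)) =
      ∑ A ∈ T.powerset, f A.card (edgeCount E (T \ A) A) := by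
  induction hN : E.card generalizing E T f with
  | zero =>
    obtain rfl := Finset.card_eq_zero.mp hN
    simp [edgeCount]
  | succ N ih =>
    have hne : E.Nonempty := Finset.card_pos.mp (by omega)
    obtain ⟨⟨i, j⟩, he, hmax⟩ := E.exists_max_image (fun p => (p.2 : ℕ) - p.1) hne
    have hij := hlt i j he
    have hmax' : ∀ a b, (a, b) ∈ E → (b : ℕ) - a ≤ j - i := fun a b h => hmax (a, b) h
    have hlt₀ : ∀ a b, (a, b) ∈ E.erase (i, j) → a < b :=
      fun a b h => hlt a b (Finset.mem_of_mem_erase h)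
    have hmid₀ : ∀ a m b, (a, b) ∈ E.erase (i, j) → a < m → m < b →
        (a, m) ∈ E.erase (i, j) ∧ (m, b) ∈ E.erase (i, j) := by
      intro a m b h ham hmb
      have h' := Finset.mem_of_mem_erase h
      obtain ⟨h1, h2⟩ := hmid a m b h' ham hmb
      have := hmax' a b h'
      simp only [Finset.mem_erase, ne_eq, Prod.mk.injEq, not_and]
      refine ⟨⟨?_, h1⟩, ?_, h2⟩
      · rintro rfl rfl; omega
      · rintro rfl rfl; omega
    have hcard : (E.erase (i, j)).card = N := by rw [Finset.card_erase_of_mem he]; omega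
    have ih₀ := fun T (f : ℕ → ℕ → M) => ih (E.erase (i, j)) hlt₀ hmid₀ T f hcard
    set E₀ := E.erase (i, j) with hE₀
    by_cases hT : i ∈ T ∧ j ∈ T
    · obtain ⟨hiT, hjT⟩ := hT
      set T' := (T.erase i).erase j with hT'
      have hiE : ∀ v, v ∈ T' → ((i, v) ∈ E₀ ↔ i < v ∧ v < j) := by
        intro v hv
        simp only [hT', Finset.mem_erase] at hv
        refine ⟨fun h => ?_, fun h => Finset.mem_erase.mpr ⟨by simp [hv.1], (hmid i v j he h.1 h.2).1⟩⟩
        have := hlt₀ _ _ h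
        have := hmax' _ _ (Finset.mem_of_mem_erase h)
        have : (v : ℕ) ≠ j := fun h => hv.1 (Fin.ext h)
        omega
      have hjE : ∀ u, u ∈ T' → ((u, j) ∈ E₀ ↔ i < u ∧ u < j) := by
        intro u hu
        simp only [hT', Finset.mem_erase] at hu
        refine ⟨fun h => ?_, fun h =>
          Finset.mem_erase.mpr ⟨by simp [hu.2.1], (hmid i u j he h.1 h.2).2⟩⟩
        have := hlt₀ _ _ h
        have := hmax' _ _ (Finset.mem_of_mem_erase h)
        have : (u : ℕ) ≠ i := fun h => hu.2.1 (Fin.ext h)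
        omega
      have hcut : ∀ U V : Finset (Fin n), Disjoint U V → U ∪ V = T' →
          edgeCount E₀ (insert i U) (insert j V) =
            edgeCount E₀ U V + (T'.filter fun m => i < m ∧ m < j).card := by
        intro U V hUV hUVT
        have hU : U ⊆ T' := hUVT ▸ Finset.subset_union_left
        have hV : V ⊆ T' := hUVT ▸ Finset.subset_union_right
        rw [← hUVT]
        refine edgeCount_insert_insert (fun h => ?_) (fun h => ?_) hUV (by simp [hE₀])
          (fun v hv => hiE v (hV hv)) (fun u hu => hjE u (hU hu))
        · simpa [hT'] using hU h
        · simpa [hT'] using hV h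
      have hL : ∀ A ∈ T.powerset, f A.card (edgeCount E A (T \ A)) =
          f A.card (edgeCount E₀ A (T \ A)) + if i ∈ A ∧ j ∉ A then
            f A.card (edgeCount E₀ A (T \ A) + 1) - f A.card (edgeCount E₀ A (T \ A)) else 0 := by
        intro A _
        rw [edgeCount_erase he]
        simp only [Finset.mem_sdiff, hjT, true_and]
        split_ifs <;> simp [hE₀]
      have hR : ∀ A ∈ T.powerset, f A.card (edgeCount E (T \ A) A) =
          f A.card (edgeCount E₀ (T \ A) A) + if j ∈ A ∧ i ∉ A then
            f A.card (edgeCount E₀ (T \ A) A + 1) - f A.card (edgeCount E₀ (T \ A) A) else 0 := by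
        intro A _
        rw [edgeCount_erase he]
        simp only [Finset.mem_sdiff, hiT, true_and, and_comm (a := j ∈ A)]
        split_ifs <;> simp [hE₀]
      rw [Finset.sum_congr rfl hL, Finset.sum_congr rfl hR, Finset.sum_add_distrib,
        Finset.sum_add_distrib, ih₀ T f, sum_powerset_ite_mem_notMem hiT hij.ne,
        sum_powerset_ite_mem_notMem hjT hij.ne', Finset.erase_right_comm (a := j), ← hT']
      congr 1
      set c := (T'.filter fun m => i < m ∧ m < j).card
      have := ih₀ T' fun k d => f (k + 1) (d + c + 1) - f (k + 1) (d + c)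
      convert this using 1
      · refine Finset.sum_congr rfl fun A hA => ?_
        have hA := Finset.mem_powerset.mp hA
        have hs : T \ insert i A = insert j (T' \ A) := by
          ext m; have := @hA m; have := @hA j; grind
        have hi : i ∉ A := fun h => by simpa [hT'] using hA h
        rw [hs, hcut _ _ Finset.disjoint_sdiff (Finset.union_sdiff_of_subset hA),
          Finset.card_insert_of_notMem hi]
      · refine Finset.sum_congr rfl fun A hA => ?_
        have hA := Finset.mem_powerset.mp hA
        have hs : T \ insert j A = insert i (T' \ A) := by
          ext m; have := @hA m; have := @hA i; grind
        have hj : j ∉ A := fun h => by simpa [hT'] using hA h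
        rw [hs, hcut _ _ Finset.sdiff_disjoint (Finset.sdiff_union_of_subset hA),
          Finset.card_insert_of_notMem hj]
    · have hE : ∀ U V : Finset (Fin n), U ⊆ T → V ⊆ T → edgeCount E U V = edgeCount E₀ U V := by
        intro U V hU hV
        rw [edgeCount_erase he, if_neg fun h => hT ⟨hU h.1, hV h.2⟩, add_zero]
      rw [Finset.sum_congr rfl fun A hA =>
          by rw [hE _ _ (Finset.mem_powerset.mp hA) Finset.sdiff_subset], ih₀ T f]
      exact Finset.sum_congr rfl fun A hA =>
        by rw [hE _ _ Finset.sdiff_subset (Finset.mem_powerset.mp hA)]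

theorem edgeCount_eq_sum {n : ℕ} (E : Finset (Fin n × Fin n)) (U V : Finset (Fin n)) :
    edgeCount E U V = ∑ p ∈ E, if p.1 ∈ U ∧ p.2 ∈ V then 1 else 0 := by
  rw [edgeCount, ← Finset.sum_product', ← Finset.sum_filter, ← Finset.sum_filter]
  refine Finset.sum_congr ?_ fun _ _ => rfl
  ext p
  simp only [Finset.mem_filter, Finset.mem_product]
  tauto

/-- The number of inversions of the labelling `b` with barred positions `t` along the pairs in `E`,
where all barred letters exceed all unbarred ones and barred letters are compared through `k`. -/
def keyInv {n : ℕ} {α : Type*} [LinearOrder α] (E : Finset (Fin n × Fin n)) (t : Fin n → Bool)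
    (k : α → ℕ) (b : Fin n → α) : ℕ :=
  ∑ p ∈ E, if t p.1 = true ∧ (t p.2 = false ∨ k (b p.2) ≤ k (b p.1)) ∨
    t p.1 = false ∧ t p.2 = false ∧ b p.2 < b p.1 then 1 else 0

/-- The labelling obtained from `b` by giving the positions in `S` outside `A` the label `y`. -/
def setLabel {n : ℕ} {α : Type*} (b : Fin n → α) (S : Finset (Fin n)) (y : α) (A : Finset (Fin n))
    (i : Fin n) : α :=
  if i ∈ S \ A then y else b i

theorem sum_singleton_setLabel {n : ℕ} {α : Type*} (b : Fin n → α) {x : α} (y : α)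
    {S A : Finset (Fin n)} (hS : ∀ i ∈ S, b i = x) (hA : A ⊆ S) :
    ∑ i, ({setLabel b S y A i} : Multiset α) =
      A.card • {x} + (S.card - A.card) • {y} + ∑ i ∈ Sᶜ, {b i} := by
  have h1 : ∑ i ∈ A, ({setLabel b S y A i} : Multiset α) = A.card • {x} :=
    Finset.sum_eq_card_nsmul fun i hi => by simp [setLabel, hi, hS i (hA hi)]
  have h2 : ∑ i ∈ S \ A, ({setLabel b S y A i} : Multiset α) = (S \ A).card • {y} :=
    Finset.sum_eq_card_nsmul fun i hi => by rw [setLabel, if_pos hi]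
  have h3 : ∑ i ∈ Sᶜ, ({setLabel b S y A i} : Multiset α) = ∑ i ∈ Sᶜ, {b i} :=
    Finset.sum_congr rfl fun i hi => by
      rw [setLabel, if_neg fun h => Finset.mem_compl.mp hi (Finset.mem_sdiff.mp h).1]
  rw [← Finset.sum_add_sum_compl S, ← Finset.sum_sdiff hA, h1, h2, h3,
    Finset.card_sdiff_of_subset hA, add_comm (_ • _)]

theorem keyInv_setLabel {n : ℕ} {α : Type*} [LinearOrder α] (E : Finset (Fin n × Fin n))
    (t : Fin n → Bool) {k k' : α → ℕ} {x y : α} (hxy : k y = k x + 1) (hx : k' x = k x + 1)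
    (hy : k' y = k x) (hk : ∀ u, u ≠ x → u ≠ y → k' u = k u ∧ k u ≠ k x ∧ k u ≠ k x + 1)
    {b : Fin n → α} (hb : ∀ i, t i = true → b i ≠ y) {A : Finset (Fin n)}
    (hA : A ⊆ Finset.univ.filter fun i => t i = true ∧ b i = x) :
    keyInv E t k (setLabel b (Finset.univ.filter fun i => t i = true ∧ b i = x) y A) +
        edgeCount E A ((Finset.univ.filter fun i => t i = true ∧ b i = x) \ A) = keyInv E t k b ∧
      keyInv E t k' (setLabel b (Finset.univ.filter fun i => t i = true ∧ b i = x) y A) +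
        edgeCount E ((Finset.univ.filter fun i => t i = true ∧ b i = x) \ A) A =
        keyInv E t k b := by
  set S := Finset.univ.filter fun i => t i = true ∧ b i = x with hS
  have hmem : ∀ i, i ∈ S ↔ t i = true ∧ b i = x := by simp [hS]
  have hcases : ∀ i, t i = false ∧ i ∉ A ∧ i ∉ S \ A ∧ setLabel b S y A i = b i ∨
      t i = true ∧ i ∈ A ∧ i ∉ S \ A ∧ setLabel b S y A i = x ∧ b i = x ∨
      t i = true ∧ i ∉ A ∧ i ∈ S \ A ∧ setLabel b S y A i = y ∧ b i = x ∨
      t i = true ∧ i ∉ A ∧ i ∉ S \ A ∧ setLabel b S y A i = b i ∧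
        k' (b i) = k (b i) ∧ k (b i) ≠ k x ∧ k (b i) ≠ k x + 1 := by
    intro i
    have h1 := hmem i
    have h2 := @hA i
    have h3 := hb i
    have h4 := hk (b i)
    have h5 := Finset.mem_sdiff (s := S) (t := A) (a := i)
    by_cases ht : t i = true <;> by_cases hiA : i ∈ A <;> by_cases hix : b i = x <;>
      simp_all [setLabel]
  simp only [keyInv, edgeCount_eq_sum, ← Finset.sum_add_distrib]
  constructor <;>
  · refine Finset.sum_congr rfl fun p _ => ?_
    rcases hcases p.1 with h1 | h1 | h1 | h1 <;> rcases hcases p.2 with h2 | h2 | h2 | h2 <;>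
      simp only [h1, h2, hxy, hx, hy] <;> simp <;> split_ifs <;> omega

theorem sum_keyInv_eq {n : ℕ} {α : Type*} [LinearOrder α] [Fintype α] {M : Type*} [AddCommGroup M]
    (E : Finset (Fin n × Fin n)) (hlt : ∀ i j, (i, j) ∈ E → i < j)
    (hmid : ∀ i m j, (i, j) ∈ E → i < m → m < j → (i, m) ∈ E ∧ (m, j) ∈ E)
    (t : Fin n → Bool) {k k' : α → ℕ} {x y : α} (hxy : k y = k x + 1) (hx : k' x = k x + 1)
    (hy : k' y = k x) (hk : ∀ u, u ≠ x → u ≠ y → k' u = k u ∧ k u ≠ k x ∧ k u ≠ k x + 1)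
    (f : Multiset α → ℕ → M) :
    ∑ b : Fin n → α, f (∑ i, {b i}) (keyInv E t k b) =
      ∑ b : Fin n → α, f (∑ i, {b i}) (keyInv E t k' b) := by
  have hyx : y ≠ x := by rintro rfl; omega
  let merge : (Fin n → α) → Fin n → α := fun b i => if t i = true ∧ b i = y then x else b i
  have hfib : ∀ F : (Fin n → α) → M, ∑ b, F b =
      ∑ c ∈ Finset.univ.filter (fun c : Fin n → α => ∀ i, t i = true → c i ≠ y),
        ∑ A ∈ (Finset.univ.filter fun i => t i = true ∧ c i = x).powerset,
          F (setLabel c (Finset.univ.filter fun i => t i = true ∧ c i = x) y A) := by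
    intro F
    rw [← Finset.sum_fiberwise_of_maps_to (g := merge)
      (t := Finset.univ.filter fun c : Fin n → α => ∀ i, t i = true → c i ≠ y)]
    · refine Finset.sum_congr rfl fun c hc => ?_
      have hc := (Finset.mem_filter.mp hc).2
      symm
      refine Finset.sum_nbij' (fun A => setLabel c (Finset.univ.filter fun i => t i = true ∧ c i = x) y A)
        (fun b => Finset.univ.filter fun i => t i = true ∧ b i = x) ?_ ?_ ?_ ?_ fun _ _ => rfl
      · intro A hA
        simp only [Finset.mem_filter, Finset.mem_univ, true_and, merge]
        ext i
        have := hc i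
        simp only [setLabel, Finset.mem_sdiff, Finset.mem_filter, Finset.mem_univ, true_and]
        grind
      · intro b hb
        obtain rfl := (Finset.mem_filter.mp hb).2
        refine Finset.mem_powerset.mpr fun i => ?_
        simp only [Finset.mem_filter, Finset.mem_univ, true_and, merge]
        grind
      · intro A hA
        have hA := Finset.mem_powerset.mp hA
        ext i
        have := @hA i
        simp only [setLabel, Finset.mem_sdiff, Finset.mem_filter, Finset.mem_univ, true_and] at this ⊢
        grind
      · intro b hb
        obtain rfl := (Finset.mem_filter.mp hb).2
        ext i
        simp only [setLabel, Finset.mem_sdiff, Finset.mem_filter, Finset.mem_univ, true_and, merge]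
        grind
    · intro b _
      simp only [Finset.mem_filter, Finset.mem_univ, true_and, merge]
      grind
  rw [hfib, hfib]
  refine Finset.sum_congr rfl fun c hc => ?_
  have hc := (Finset.mem_filter.mp hc).2
  have key := fun A hA => keyInv_setLabel E t hxy hx hy hk hc (A := A) hA
  have hSx : ∀ i ∈ Finset.univ.filter (fun i => t i = true ∧ c i = x), c i = x :=
    fun i hi => (Finset.mem_filter.mp hi).2.2
  set S := Finset.univ.filter fun i => t i = true ∧ c i = x
  have := sum_powerset_edgeCount_compl E hlt hmid S fun a d =>
    f (a • {x} + (S.card - a) • {y} + ∑ i ∈ Sᶜ, {c i}) (keyInv E t k c - d)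
  convert this using 1 <;>
  · refine Finset.sum_congr rfl fun A hA => ?_
    have hA := Finset.mem_powerset.mp hA
    obtain ⟨h1, h2⟩ := key A hA
    rw [sum_singleton_setLabel c y hSx hA]
    congr 1
    omega

theorem sum_keyInv_perm {n N : ℕ} {M : Type*} [AddCommGroup M]
    (E : Finset (Fin n × Fin n)) (hlt : ∀ i j, (i, j) ∈ E → i < j)
    (hmid : ∀ i m j, (i, j) ∈ E → i < m → m < j → (i, m) ∈ E ∧ (m, j) ∈ E)
    (t : Fin n → Bool) (f : Multiset (Fin (N + 1)) → ℕ → M) (σ : Equiv.Perm (Fin (N + 1))) :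
    ∑ b : Fin n → Fin (N + 1), f (∑ i, {b i}) (keyInv E t (fun a => (σ a : ℕ)) b) =
      ∑ b : Fin n → Fin (N + 1), f (∑ i, {b i}) (keyInv E t (fun a : Fin (N + 1) => (a : ℕ)) b) := by
  have hσ : σ ∈ Submonoid.closure
      (Set.range fun i : Fin N => Equiv.swap i.castSucc i.succ) := by
    rw [Equiv.Perm.mclosure_swap_castSucc_succ]; trivial
  induction hσ using Submonoid.closure_induction_left with
  | one => rfl
  | mul_left s hs τ _ ih =>
    obtain ⟨v, rfl⟩ := hs
    rw [← ih]
    symm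
    refine sum_keyInv_eq E hlt hmid t (x := τ.symm v.castSucc) (y := τ.symm v.succ)
      (by simp) (by simp) (by simp) ?_ f
    intro u hux huy
    have h1 : τ u ≠ v.castSucc := fun h => hux (by simp [← h])
    have h2 : τ u ≠ v.succ := fun h => huy (by simp [← h])
    refine ⟨by simp [Equiv.swap_apply_of_ne_of_ne h1 h2], ?_, ?_⟩
    · simpa [Fin.ext_iff] using h1
    · simpa [Fin.ext_iff] using h2

theorem sum_sign_mul_pow_keyInv_eq_zero {n : ℕ} {α R : Type*} [LinearOrder α] [CommRing R]
    (hn : 1 ≤ n) (E : Finset (Fin n × Fin n)) (hlt : ∀ i j, (i, j) ∈ E → i < j) {k : α → ℕ}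
    (hk : StrictAnti k) (b : Fin n → α) (q : R) :
    ∑ t : Fin n → Bool, (-1 : R) ^ (Finset.univ.filter fun i => t i = true).card *
      q ^ keyInv E t k b = 0 := by
  have : Nonempty (Fin n) := ⟨⟨0, hn⟩⟩
  obtain ⟨m, -, hm⟩ := Finset.univ.exists_max_image b Finset.univ_nonempty
  obtain ⟨j, hj, hjmax⟩ := (Finset.univ.filter fun i => b i = b m).exists_max_image id
    ⟨m, by simp⟩
  have hbj : b j = b m := (Finset.mem_filter.mp hj).2
  have hle : ∀ i, b i ≤ b j := fun i => hbj ▸ hm i (Finset.mem_univ i)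
  have hgt : ∀ i, j < i → b i < b j := fun i hi =>
    lt_of_le_of_ne (hle i) fun h => absurd hi (not_lt.mpr (hjmax i (by simp [h, hbj])))
  have hinv : ∀ t, keyInv E (Function.update t j (!t j)) k b = keyInv E t k b := by
    intro t
    refine Finset.sum_congr rfl fun p hp => ?_
    have hp := hlt p.1 p.2 hp
    rcases eq_or_ne p.1 j with h1 | h1
    · have h2 : p.2 ≠ j := by rintro h2; omega
      have h3 := hgt p.2 (h1 ▸ hp)
      have h4 := hk h3
      rw [Function.update_of_ne h2, h1, Function.update_self]
      cases t j <;> cases t p.2 <;> simp [h3, h4]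
    · rcases eq_or_ne p.2 j with h2 | h2
      · have h3 := hle p.1
        have h4 := hk.antitone h3
        rw [Function.update_of_ne h1, h2, Function.update_self]
        cases t j <;> cases t p.1 <;> simp [h3, h4]
      · rw [Function.update_of_ne h1, Function.update_of_ne h2]
  have hsign : ∀ t : Fin n → Bool, (-1 : R) ^ (Finset.univ.filter fun i => t i = true).card =
      (if t j = true then -1 else 1) * ∏ i ∈ Finset.univ.erase j, if t i = true then -1 else 1 := by
    intro t
    rw [Finset.mul_prod_erase _ (fun i => if t i = true then (-1 : R) else 1) (Finset.mem_univ j),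
      Finset.prod_ite, Finset.prod_const, Finset.prod_const_one, mul_one]
  refine Finset.sum_involution (fun t _ => Function.update t j (!t j)) ?_ ?_ (by simp) (by simp)
  · intro t _
    have : ∏ i ∈ Finset.univ.erase j, (if Function.update t j (!t j) i = true then (-1 : R) else 1) =
        ∏ i ∈ Finset.univ.erase j, if t i = true then -1 else 1 :=
      Finset.prod_congr rfl fun i hi => by rw [Function.update_of_ne (Finset.ne_of_mem_erase hi)]
    rw [hinv, hsign, hsign, this, Function.update_self]
    cases t j <;> simp
  · intro t _ _ h
    simpa using congrFun h j

theorem exists_perm_comp_eq_iff {ι α : Type*} [Fintype ι] (b c : ι → α) :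
    (∃ σ : Equiv.Perm ι, b ∘ σ = c) ↔ ∑ i, ({c i} : Multiset α) = ∑ i, {b i} := by
  classical
  constructor
  · rintro ⟨σ, rfl⟩
    exact Equiv.sum_comp σ fun i => ({b i} : Multiset α)
  · intro h
    have hcard : ∀ a, Fintype.card {i // c i = a} = Fintype.card {i // b i = a} := by
      intro a
      have := congrArg (Multiset.count a) h
      simpa [Multiset.count_sum', Multiset.count_singleton, Fintype.card_subtype, eq_comm]
        using this
    exact ⟨Equiv.ofFiberEquiv fun a => Fintype.equivOfCardEq (hcard a),
      funext fun i => Equiv.ofFiberEquiv_map _ i⟩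

theorem invPi_superLabel {n N : ℕ} (h : Fin n → Fin n) (b : Fin n → Fin (N + 1))
    (t : Fin n → Bool) :
    invPi h (superLabel (fun i => (b i : ℕ)) t) =
      keyInv (Finset.univ.filter fun p : Fin n × Fin n => p.1 < p.2 ∧ p.2 ≤ h p.1) t
        (fun a : Fin (N + 1) => (a : ℕ)) b := by
  refine Finset.sum_congr rfl fun p _ => ?_
  have h1 := Finset.le_sup (f := fun i => (b i : ℕ)) (Finset.mem_univ p.1)
  have h2 := Finset.le_sup (f := fun i => (b i : ℕ)) (Finset.mem_univ p.2)
  have h3 : b p.2 < b p.1 ↔ (b p.2 : ℕ) < b p.1 := Iff.rfl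
  simp only [epsSuper, superLabel, h3] at h1 h2 ⊢
  generalize (b p.1 : ℕ) = u, (b p.2 : ℕ) = v, Finset.univ.sup (fun i => (b i : ℕ)) = s at h1 h2 ⊢
  refine if_congr ?_ rfl rfl
  cases t p.1 <;> cases t p.2 <;> simp <;> omega

/-- Vanishing of `χ_{π,l}` for `l = 0`: for every Dyck path `π` and every label `b₀`,
the coefficient `∑_{b rearranging b₀} ∑_{t ∈ {0,1}ⁿ} (−1)^{|t|} q^{inv_π(b·t)}` of the
monomial of content `b₀` in `χ_{π,0}[Y;q]` vanishes in `ℤ[q]`. -/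
theorem chi_pi_zero_vanishes (n : ℕ) (hn : 1 ≤ n)
    (h : Fin n → Fin n) (hmono : Monotone h) (hge : ∀ i, i ≤ h i)
    (b₀ : Fin n → ℕ) (hb₀ : ∀ i, 1 ≤ b₀ i) :
    ∑ b ∈ Finset.image (fun σ : Equiv.Perm (Fin n) => b₀ ∘ ⇑σ) Finset.univ,
      ∑ t : Fin n → Bool,
        (-1 : Polynomial ℤ) ^ ((Finset.univ.filter (fun i => t i = true)).card)
          * Polynomial.X ^ invPi h (superLabel b t) = 0 := by
  obtain ⟨N, β, rfl⟩ : ∃ N, ∃ β : Fin n → Fin (N + 1), b₀ = fun i => (β i : ℕ) :=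
    ⟨Finset.univ.sup b₀,
      fun i => ⟨b₀ i, Nat.lt_succ_of_le (Finset.le_sup (Finset.mem_univ i))⟩, rfl⟩
  set E := Finset.univ.filter fun p : Fin n × Fin n => p.1 < p.2 ∧ p.2 ≤ h p.1 with hE
  have hlt : ∀ i j, (i, j) ∈ E → i < j := fun i j hij => (Finset.mem_filter.mp hij).2.1
  have hmid : ∀ i m j, (i, j) ∈ E → i < m → m < j → (i, m) ∈ E ∧ (m, j) ∈ E := by
    intro i m j hij him hmj
    simp only [hE, Finset.mem_filter, Finset.mem_univ, true_and] at hij ⊢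
    exact ⟨⟨him, hmj.le.trans hij.2⟩, hmj, hij.2.trans (hmono him.le)⟩
  have himage : Finset.image (fun σ : Equiv.Perm (Fin n) => (fun i => (β i : ℕ)) ∘ ⇑σ) Finset.univ =
      (Finset.univ.filter fun b : Fin n → Fin (N + 1) =>
        ∑ i, ({b i} : Multiset _) = ∑ i, {β i}).image fun b i => (b i : ℕ) := by
    ext c
    simp only [Finset.mem_image, Finset.mem_filter, Finset.mem_univ, true_and,
      ← exists_perm_comp_eq_iff]
    constructor
    · rintro ⟨σ, rfl⟩
      exact ⟨β ∘ σ, ⟨σ, rfl⟩, rfl⟩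
    · rintro ⟨_, ⟨σ, rfl⟩, rfl⟩
      exact ⟨σ, rfl⟩
  have hinj : Function.Injective fun (b : Fin n → Fin (N + 1)) i => (b i : ℕ) :=
    fun b c hbc => funext fun i => Fin.ext (congrFun hbc i)
  have hrev : ∀ t : Fin n → Bool,
      ∑ b ∈ Finset.univ.filter fun b : Fin n → Fin (N + 1) =>
        ∑ i, ({b i} : Multiset _) = ∑ i, {β i},
        (Polynomial.X : Polynomial ℤ) ^ keyInv E t (fun a : Fin (N + 1) => (a : ℕ)) b =
      ∑ b ∈ Finset.univ.filter fun b : Fin n → Fin (N + 1) =>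
        ∑ i, ({b i} : Multiset _) = ∑ i, {β i},
        Polynomial.X ^ keyInv E t (fun a : Fin (N + 1) => (Fin.revPerm a : ℕ)) b := by
    intro t
    rw [Finset.sum_filter, Finset.sum_filter]
    exact (sum_keyInv_perm E hlt hmid t
      (fun m d => if m = ∑ i, {β i} then (Polynomial.X : Polynomial ℤ) ^ d else 0) Fin.revPerm).symm
  rw [himage, Finset.sum_image hinj.injOn]
  simp only [invPi_superLabel, ← hE]
  rw [Finset.sum_comm]
  simp only [← Finset.mul_sum, hrev]
  simp only [Finset.mul_sum]
  rw [Finset.sum_comm]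
  refine Finset.sum_eq_zero fun b _ => sum_sign_mul_pow_keyInv_eq_zero hn E hlt ?_ b _
  exact fun a c hac => Fin.lt_def.mp (Fin.rev_lt_rev.mpr hac)
end

section
/- (Vanishing of χ_{π,l} at a touch point.) Let n ≥ 1, let π be a Dyck path given by a nondecreasing function h : {1,…,n} → {1,…,n} with h(i) ≥ i, and let 0 ≤ l ≤ n. Suppose there exists i₀ with 1 ≤ i₀ < n and i₀ ≤ n − l such that h(j) ≤ i₀ for all j ≤ i₀ (i.e. π has a touch point: no j ≤ i₀ attacks any j' > i₀). Then for every label b₀ : {1,…,n} → ℕ_{≥1}, the following identity holds in ℤ[q]: ∑_b ∑_{t ∈ {0,1}ⁿ, t_i = 1 ⇒ i ≤ n−l} (−1)^{t₁+⋯+tₙ} q^{inv_π(b·t)} = 0, where the outer sum is over all b that are rearrangements of b₀. In other words, the symmetric function χ_{π,l}[Y;q] vanishes. -/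
theorem sum_apply_card_filter_lt {α M : Type*} [LinearOrder α] [AddCommMonoid M]
    (f : ℕ → M) (s : Finset α) :
    ∑ i ∈ s, f (s.filter (i < ·)).card = ∑ k ∈ Finset.range s.card, f k := by
  induction s using Finset.induction_on_min with
  | empty => simp
  | insert a s ha ih =>
    have has : a ∉ s := fun h => lt_irrefl _ (ha a h)
    rw [Finset.sum_insert has, Finset.card_insert_of_notMem has, Finset.sum_range_succ,
      add_comm, ← ih]
    congr 1
    · refine Finset.sum_congr rfl fun i hi => ?_
      rw [Finset.filter_insert, if_neg (ha i hi).not_gt]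
    · rw [Finset.filter_insert, if_neg (lt_irrefl a), Finset.filter_true_of_mem ha]

/-- Within any set of vertices of the graph of a Dyck path, the out-degrees and the in-degrees
have the same distribution. -/
theorem sum_apply_outdegree_eq_sum_apply_indegree {α M : Type*} [LinearOrder α]
    [AddCommMonoid M] {h : α → α} (hmono : Monotone h) (f : ℕ → M) (s : Finset α) :
    ∑ i ∈ s, f (s.filter fun j => i < j ∧ j ≤ h i).card =
      ∑ j ∈ s, f (s.filter fun i => i < j ∧ j ≤ h i).card := by
  induction s using Finset.induction_on_max with
  | empty => simp
  | insert a s ha ih =>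
    have has : a ∉ s := fun h => lt_irrefl _ (ha a h)
    set S := s.filter fun i => a ≤ h i with hS
    have hin : ∀ j ∈ s, ((insert a s).filter fun i => i < j ∧ j ≤ h i) =
        s.filter fun i => i < j ∧ j ≤ h i := fun j hj => by
      rw [Finset.filter_insert, if_neg fun hh => (ha j hj).not_gt hh.1]
    have hina : ((insert a s).filter fun i => i < a ∧ a ≤ h i) = S := by
      rw [Finset.filter_insert, if_neg fun hh => lt_irrefl _ hh.1]
      exact Finset.filter_congr fun i hi => by simp [ha i hi]
    have houta : ((insert a s).filter fun j => a < j ∧ j ≤ h a) = ∅ := by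
      rw [Finset.filter_insert, if_neg fun hh => lt_irrefl _ hh.1]
      exact Finset.filter_false_of_mem fun i hi hh => (ha i hi).not_gt hh.1
    have hout : ∀ i ∈ s, ¬ a ≤ h i → ((insert a s).filter fun j => i < j ∧ j ≤ h i) =
        s.filter fun j => i < j ∧ j ≤ h i := fun i _ hi => by
      rw [Finset.filter_insert, if_neg fun hh => hi hh.2]
    have houtS : ∀ i ∈ S, (s.filter fun j => i < j ∧ j ≤ h i) = S.filter (i < ·) := by
      intro i hi
      rw [hS, Finset.mem_filter] at hi
      ext j
      simp only [hS, Finset.mem_filter]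
      constructor
      · rintro ⟨hj, hij, -⟩
        exact ⟨⟨hj, hi.2.trans (hmono hij.le)⟩, hij⟩
      · rintro ⟨⟨hj, -⟩, hij⟩
        exact ⟨hj, hij, (ha j hj).le.trans hi.2⟩
    have houtS' : ∀ i ∈ S, ((insert a s).filter fun j => i < j ∧ j ≤ h i).card =
        (S.filter (i < ·)).card + 1 := by
      intro i hi
      have hi' := hi
      rw [hS, Finset.mem_filter] at hi'
      rw [Finset.filter_insert, if_pos ⟨ha i hi'.1, hi'.2⟩, Finset.card_insert_of_notMem
        (fun hh => has (Finset.mem_filter.1 hh).1), houtS i hi]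
    have hsplit : ∑ i ∈ s, f ((insert a s).filter fun j => i < j ∧ j ≤ h i).card =
        ∑ k ∈ Finset.range S.card, f (k + 1) +
          ∑ i ∈ s with ¬ a ≤ h i, f (s.filter fun j => i < j ∧ j ≤ h i).card := by
      rw [← Finset.sum_filter_add_sum_filter_not s (fun i => a ≤ h i), ← hS,
        ← sum_apply_card_filter_lt (fun k => f (k + 1))]
      congr 1
      · exact Finset.sum_congr rfl fun i hi => by rw [houtS' i hi]
      · refine Finset.sum_congr rfl fun i hi => ?_
        rw [Finset.mem_filter] at hi
        rw [hout i hi.1 hi.2]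
    have hsplit' : ∑ i ∈ s, f (s.filter fun j => i < j ∧ j ≤ h i).card =
        ∑ k ∈ Finset.range S.card, f k +
          ∑ i ∈ s with ¬ a ≤ h i, f (s.filter fun j => i < j ∧ j ≤ h i).card := by
      rw [← Finset.sum_filter_add_sum_filter_not s (fun i => a ≤ h i), ← hS,
        ← sum_apply_card_filter_lt f]
      congr 1
      exact Finset.sum_congr rfl fun i hi => by rw [houtS i hi]
    have hsum_in : ∑ j ∈ s, f ((insert a s).filter fun i => i < j ∧ j ≤ h i).card =
        ∑ j ∈ s, f (s.filter fun i => i < j ∧ j ≤ h i).card :=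
      Finset.sum_congr rfl fun j hj => by rw [hin j hj]
    rw [Finset.sum_insert has, Finset.sum_insert has, houta, hina, hsum_in, ← ih, hsplit, hsplit',
      ← add_assoc, ← add_assoc, Finset.card_empty, add_comm (f 0), ← Finset.sum_range_succ' f,
      Finset.sum_range_succ, add_comm (f S.card)]

/-- A colour-preserving permutation turning in-degrees into out-degrees, where degrees count
neighbours of the same colour. -/
theorem exists_perm_indegree_eq_outdegree {α β : Type*} [LinearOrder α] [Fintype α]
    [DecidableEq β] {h : α → α} (hmono : Monotone h) (κ : α → β) :
    ∃ φ : Equiv.Perm α, (∀ i, κ (φ i) = κ i) ∧ ∀ i,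
      (Finset.univ.filter fun j => (i < j ∧ j ≤ h i) ∧ κ i = κ j).card =
        (Finset.univ.filter fun j => (j < φ i ∧ φ i ≤ h j) ∧ κ j = κ (φ i)).card := by
  let outd : α → ℕ := fun i =>
    (Finset.univ.filter fun j => (i < j ∧ j ≤ h i) ∧ κ i = κ j).card
  let ind : α → ℕ := fun i =>
    (Finset.univ.filter fun j => (j < i ∧ i ≤ h j) ∧ κ j = κ i).card
  have key (c : β × ℕ) :
      Nonempty ({i // (κ i, outd i) = c} ≃ {i // (κ i, ind i) = c}) := by
    obtain ⟨a, d⟩ := c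
    have := sum_apply_outdegree_eq_sum_apply_indegree hmono (fun k => if k = d then 1 else 0)
      (Finset.univ.filter fun i => κ i = a)
    rw [← Finset.card_filter, ← Finset.card_filter, Finset.filter_filter,
      Finset.filter_filter] at this
    rw [← Fintype.card_eq, Fintype.card_subtype, Fintype.card_subtype]
    refine Eq.trans (congrArg Finset.card (Finset.filter_congr fun i _ => ?_))
      (this.trans (congrArg Finset.card (Finset.filter_congr fun i _ => ?_)))
    · rw [Prod.mk.injEq]
      refine and_congr_right fun hi => ?_
      rw [Finset.filter_filter]
      subst hi
      simp only [outd, and_comm, eq_comm]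
    · rw [Prod.mk.injEq]
      refine and_congr_right fun hi => ?_
      rw [Finset.filter_filter]
      subst hi
      simp only [ind, and_comm]
  have hφ := Equiv.ofFiberEquiv_map fun c => (key c).some
  exact ⟨Equiv.ofFiberEquiv fun c => (key c).some, fun i => congrArg Prod.fst (hφ i),
    fun i => (congrArg Prod.snd (hφ i)).symm⟩

/-- The super label `b·t` whose barred letters are shifted by `k` on the first `m` positions
and by `N` on the others. -/
def shiftedLabel {n : ℕ} (m k N : ℕ) (b : Fin n → ℕ) (t : Fin n → Bool) (i : Fin n) :
    ℕ × Bool :=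
  (if t i then b i + (if (i : ℕ) < m then k else N) else b i, t i)

/-- The colouring by the values of `shiftedLabel` on the first `m` positions, every other
position having a colour of its own. -/
def shiftedColor {n : ℕ} (m k N : ℕ) (b : Fin n → ℕ) (t : Fin n → Bool) (i : Fin n) : ℕ × ℕ :=
  ((shiftedLabel m k N b t i).1, if (i : ℕ) < m then 0 else i + 1)

theorem lt_iff_of_snd_shiftedColor_eq {n m k N : ℕ} {b b' : Fin n → ℕ} {t t' : Fin n → Bool}
    {i j : Fin n} (hij : (shiftedColor m k N b t i).2 = (shiftedColor m k N b' t' j).2) :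
    (i : ℕ) < m ↔ (j : ℕ) < m := by
  simp only [shiftedColor] at hij
  split_ifs at hij <;> omega

theorem eq_of_snd_shiftedColor_eq {n m k N : ℕ} {b b' : Fin n → ℕ} {t t' : Fin n → Bool}
    {i j : Fin n} (hij : (shiftedColor m k N b t i).2 = (shiftedColor m k N b' t' j).2)
    (hi : ¬ (i : ℕ) < m) : i = j := by
  have hj := mt (lt_iff_of_snd_shiftedColor_eq hij).2 hi
  simp only [shiftedColor, if_neg hi, if_neg hj] at hij
  exact Fin.ext (by omega)

theorem shiftedLabel_comp_perm {n m k N : ℕ} {b : Fin n → ℕ} {t : Fin n → Bool}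
    {φ : Equiv.Perm (Fin n)} (hφ : ∀ i, (φ i : ℕ) < m ↔ (i : ℕ) < m) (i : Fin n) :
    shiftedLabel m k N (b ∘ φ) (t ∘ φ) i = shiftedLabel m k N b t (φ i) := by
  simp [shiftedLabel, hφ]

theorem shiftedColor_comp_perm {n m k N : ℕ} {b : Fin n → ℕ} {t : Fin n → Bool}
    {φ : Equiv.Perm (Fin n)}
    (hφ : ∀ i, shiftedColor m k N b t (φ i) = shiftedColor m k N b t i) :
    shiftedColor m k N (b ∘ φ) (t ∘ φ) = shiftedColor m k N b t := by
  have hm i := lt_iff_of_snd_shiftedColor_eq (congrArg Prod.snd (hφ i))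
  funext i
  rw [← hφ i, shiftedColor, shiftedColor, shiftedLabel_comp_perm hm]
  have := congrArg Prod.snd (hφ i)
  simp only [shiftedColor] at this
  rw [this]

theorem sum_filter_ite_fst {α : Type*} [Fintype α] (P Q : α → α → Prop) [DecidableRel P]
    [DecidableRel Q] (u : α → Bool) :
    ∑ p ∈ Finset.univ.filter (fun p : α × α => P p.1 p.2),
        (if Q p.1 p.2 ∧ u p.1 = true then 1 else 0) =
      ∑ i, if u i = true then (Finset.univ.filter fun j => P i j ∧ Q i j).card else 0 := by
  rw [Finset.sum_filter, Fintype.sum_prod_type]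
  refine Finset.sum_congr rfl fun i _ => ?_
  split_ifs with hu
  · rw [Finset.card_filter]
    refine Finset.sum_congr rfl fun j _ => ?_
    simp [hu, ite_and]
  · simp [hu]

theorem sum_filter_ite_snd {α : Type*} [Fintype α] (P Q : α → α → Prop) [DecidableRel P]
    [DecidableRel Q] (u : α → Bool) :
    ∑ p ∈ Finset.univ.filter (fun p : α × α => P p.1 p.2),
        (if Q p.1 p.2 ∧ u p.2 = true then 1 else 0) =
      ∑ j, if u j = true then (Finset.univ.filter fun i => P i j ∧ Q i j).card else 0 := by
  rw [Finset.sum_filter, Fintype.sum_prod_type_right]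
  refine Finset.sum_congr rfl fun j _ => ?_
  split_ifs with hu
  · rw [Finset.card_filter]
    refine Finset.sum_congr rfl fun i _ => ?_
    simp [hu, ite_and]
  · simp [hu]

/-- Inversions that do not come from a barred letter tied with another letter of the first `m`
positions. -/
def strictInv {n : ℕ} (h : Fin n → Fin n) (m : ℕ) (c : Fin n → ℕ × Bool) : ℕ :=
  ∑ p ∈ Finset.univ.filter (fun p : Fin n × Fin n => p.1 < p.2 ∧ p.2 ≤ h p.1),
    if (p.1 : ℕ) < m then (if (c p.2).1 < (c p.1).1 then 1 else 0) else epsSuper (c p.1) (c p.2)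

theorem invPi_shiftedLabel_succ {n : ℕ} {h : Fin n → Fin n} {m : ℕ}
    (hm : ∀ i : Fin n, (i : ℕ) < m → (h i : ℕ) < m) (k N : ℕ) (b : Fin n → ℕ)
    (t : Fin n → Bool) :
    invPi h (shiftedLabel m (k + 1) N b t) =
      strictInv h m (shiftedLabel m (k + 1) N b t) + ∑ i, if t i = true then
        (Finset.univ.filter fun j => (i < j ∧ j ≤ h i) ∧
          shiftedColor m (k + 1) N b t i = shiftedColor m (k + 1) N b t j).card else 0 := by
  rw [← sum_filter_ite_fst (fun i j => i < j ∧ j ≤ h i), strictInv, ← Finset.sum_add_distrib,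
    invPi]
  refine Finset.sum_congr rfl fun ⟨i, j⟩ hp => ?_
  obtain ⟨hij, hji⟩ := (Finset.mem_filter.1 hp).2
  dsimp only at hij hji ⊢
  by_cases hi : (i : ℕ) < m
  · have hj : (j : ℕ) < m := lt_of_le_of_lt hji (hm i hi)
    simp only [epsSuper, shiftedColor, shiftedLabel, hi, hj, if_true, Prod.mk.injEq, and_true]
    cases t i <;> cases t j <;> simp <;> split_ifs <;> first | rfl | omega
  · rw [if_neg hi, if_neg fun hc =>
      hij.ne (eq_of_snd_shiftedColor_eq (congrArg Prod.snd hc.1) hi), add_zero]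

theorem invPi_shiftedLabel {n : ℕ} {h : Fin n → Fin n} {m : ℕ}
    (hm : ∀ i : Fin n, (i : ℕ) < m → (h i : ℕ) < m) (k N : ℕ) (b : Fin n → ℕ)
    (t : Fin n → Bool) :
    invPi h (shiftedLabel m k N b t) =
      strictInv h m (shiftedLabel m (k + 1) N b t) + ∑ j, if t j = true then
        (Finset.univ.filter fun i => (i < j ∧ j ≤ h i) ∧
          shiftedColor m (k + 1) N b t i = shiftedColor m (k + 1) N b t j).card else 0 := by
  rw [← sum_filter_ite_snd (fun i j => i < j ∧ j ≤ h i), strictInv, ← Finset.sum_add_distrib,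
    invPi]
  refine Finset.sum_congr rfl fun ⟨i, j⟩ hp => ?_
  obtain ⟨hij, hji⟩ := (Finset.mem_filter.1 hp).2
  dsimp only at hij hji ⊢
  by_cases hi : (i : ℕ) < m
  · have hj : (j : ℕ) < m := lt_of_le_of_lt hji (hm i hi)
    simp only [epsSuper, shiftedColor, shiftedLabel, hi, hj, if_true, Prod.mk.injEq, and_true]
    cases t i <;> cases t j <;> simp <;> split_ifs <;> first | rfl | omega
  · have hj : ¬ (j : ℕ) < m := fun hj => hi (lt_trans hij hj)
    rw [if_neg hi, if_neg fun hc =>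
      hij.ne (eq_of_snd_shiftedColor_eq (congrArg Prod.snd hc.1) hi), add_zero]
    simp only [shiftedLabel, hi, hj, if_false]

theorem strictInv_congr {n : ℕ} (h : Fin n → Fin n) (m : ℕ) {c c' : Fin n → ℕ × Bool}
    (h₁ : ∀ i, (c i).1 = (c' i).1) (h₂ : ∀ i : Fin n, ¬ (i : ℕ) < m → c i = c' i) :
    strictInv h m c = strictInv h m c' := by
  refine Finset.sum_congr rfl fun ⟨i, j⟩ hp => ?_
  have hij : i < j := (Finset.mem_filter.1 hp).2.1
  dsimp only
  by_cases hi : (i : ℕ) < m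
  · rw [if_pos hi, if_pos hi, h₁, h₁]
  · rw [if_neg hi, if_neg hi, h₂ i hi, h₂ j fun hj => hi (lt_trans hij hj)]

theorem invPi_shiftedLabel_comp_perm {n : ℕ} {h : Fin n → Fin n} {m : ℕ}
    (hm : ∀ i : Fin n, (i : ℕ) < m → (h i : ℕ) < m) (k N : ℕ) (b : Fin n → ℕ)
    (t : Fin n → Bool) {φ : Equiv.Perm (Fin n)}
    (hφ : ∀ i, shiftedColor m (k + 1) N b t (φ i) = shiftedColor m (k + 1) N b t i)
    (hdeg : ∀ i, (Finset.univ.filter fun j => (i < j ∧ j ≤ h i) ∧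
        shiftedColor m (k + 1) N b t i = shiftedColor m (k + 1) N b t j).card =
      (Finset.univ.filter fun j => (j < φ i ∧ φ i ≤ h j) ∧
        shiftedColor m (k + 1) N b t j = shiftedColor m (k + 1) N b t (φ i)).card) :
    invPi h (shiftedLabel m k N (b ∘ φ.symm) (t ∘ φ.symm)) =
      invPi h (shiftedLabel m (k + 1) N b t) := by
  have hφ' (i) : shiftedColor m (k + 1) N b t (φ.symm i) = shiftedColor m (k + 1) N b t i := by
    rw [← hφ (φ.symm i), Equiv.apply_symm_apply]
  have hcolor := shiftedColor_comp_perm hφ'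
  rw [invPi_shiftedLabel_succ hm, invPi_shiftedLabel hm, hcolor]
  congr 1
  · refine strictInv_congr h m (fun i => (Prod.ext_iff.1 (congrFun hcolor i)).1) fun i hi => ?_
    rw [shiftedLabel_comp_perm fun i => lt_iff_of_snd_shiftedColor_eq (congrArg Prod.snd (hφ' i)),
      ← eq_of_snd_shiftedColor_eq (congrArg Prod.snd (hφ' i).symm) hi]
  · rw [← Equiv.sum_comp φ]
    refine Finset.sum_congr rfl fun i _ => ?_
    rw [hdeg i, Function.comp_apply, Equiv.symm_apply_apply]

theorem sum_shiftedLabel_succ {n : ℕ} {h : Fin n → Fin n} (hmono : Monotone h) {m r : ℕ}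
    (hmr : m ≤ r) (hm : ∀ i : Fin n, (i : ℕ) < m → (h i : ℕ) < m) (k N : ℕ)
    {B : Finset (Fin n → ℕ)} (hB : ∀ b ∈ B, ∀ σ : Equiv.Perm (Fin n), b ∘ σ ∈ B) :
    ∑ b ∈ B, ∑ t ∈ Finset.univ.filter
          (fun t : Fin n → Bool => ∀ i, t i = true → (i : ℕ) + 1 ≤ r),
        (-1 : Polynomial ℤ) ^ ((Finset.univ.filter (fun i => t i = true)).card)
          * Polynomial.X ^ invPi h (shiftedLabel m (k + 1) N b t) =
      ∑ b ∈ B, ∑ t ∈ Finset.univ.filter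
          (fun t : Fin n → Bool => ∀ i, t i = true → (i : ℕ) + 1 ≤ r),
        (-1 : Polynomial ℤ) ^ ((Finset.univ.filter (fun i => t i = true)).card)
          * Polynomial.X ^ invPi h (shiftedLabel m k N b t) := by
  choose φ hφ hdeg using fun κ : Fin n → ℕ × ℕ => exists_perm_indegree_eq_outdegree hmono κ
  have hφ' (κ : Fin n → ℕ × ℕ) (i) : κ ((φ κ).symm i) = κ i := by
    rw [← hφ κ ((φ κ).symm i), Equiv.apply_symm_apply]
  have ht (σ : Equiv.Perm (Fin n)) (b : Fin n → ℕ) (t : Fin n → Bool)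
      (hσ : ∀ i, shiftedColor m (k + 1) N b t (σ i) = shiftedColor m (k + 1) N b t i)
      (ht : ∀ i, t i = true → (i : ℕ) + 1 ≤ r) (i) (hi : (t ∘ σ) i = true) :
      (i : ℕ) + 1 ≤ r := by
    by_cases him : (i : ℕ) < m
    · omega
    · refine ht i ?_
      rw [eq_of_snd_shiftedColor_eq (congrArg Prod.snd (hσ i).symm) him]
      exact hi
  simp only [← Finset.sum_product']
  refine Finset.sum_nbij'
    (fun p => (p.1 ∘ (φ (shiftedColor m (k + 1) N p.1 p.2)).symm,
      p.2 ∘ (φ (shiftedColor m (k + 1) N p.1 p.2)).symm))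
    (fun p => (p.1 ∘ φ (shiftedColor m (k + 1) N p.1 p.2),
      p.2 ∘ φ (shiftedColor m (k + 1) N p.1 p.2))) ?_ ?_ ?_ ?_ ?_
  · rintro ⟨b, t⟩ hp
    simp only [Finset.mem_product, Finset.mem_filter, Finset.mem_univ, true_and] at hp ⊢
    exact ⟨hB b hp.1 _, ht _ b t (hφ' _) hp.2⟩
  · rintro ⟨b, t⟩ hp
    simp only [Finset.mem_product, Finset.mem_filter, Finset.mem_univ, true_and] at hp ⊢
    exact ⟨hB b hp.1 _, ht _ b t (hφ _) hp.2⟩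
  · rintro ⟨b, t⟩ -
    dsimp only
    rw [shiftedColor_comp_perm (hφ' _)]
    simp [Function.comp_assoc]
  · rintro ⟨b, t⟩ -
    dsimp only
    rw [shiftedColor_comp_perm (hφ _)]
    simp [Function.comp_assoc]
  · rintro ⟨b, t⟩ -
    dsimp only
    rw [invPi_shiftedLabel_comp_perm hm k N b t (hφ _) (hdeg _)]
    congr 2
    exact Finset.card_equiv (φ (shiftedColor m (k + 1) N b t)) fun i => by simp

theorem sum_shiftedLabel_zero {n : ℕ} {h : Fin n → Fin n} {m r : ℕ} (hm₀ : 1 ≤ m) (hmn : m < n)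
    (hmr : m ≤ r) (hm : ∀ i : Fin n, (i : ℕ) < m → (h i : ℕ) < m) (N : ℕ) (b : Fin n → ℕ) :
    ∑ t ∈ Finset.univ.filter (fun t : Fin n → Bool => ∀ i, t i = true → (i : ℕ) + 1 ≤ r),
      (-1 : Polynomial ℤ) ^ ((Finset.univ.filter (fun i => t i = true)).card)
        * Polynomial.X ^ invPi h (shiftedLabel m 0 N b t) = 0 := by
  let p : Fin n := ⟨m - 1, by omega⟩
  have hp : (p : ℕ) + 1 = m := by simp only [p]; omega
  have hinv (t : Fin n → Bool) : invPi h (shiftedLabel m 0 N b (Function.update t p !t p)) =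
      invPi h (shiftedLabel m 0 N b t) := by
    refine Finset.sum_congr rfl fun ⟨i, j⟩ hij => ?_
    obtain ⟨hij, hji⟩ := (Finset.mem_filter.1 hij).2
    dsimp only at hij hji ⊢
    have hip : i ≠ p := by
      rintro rfl
      have h₁ := hm p (by omega)
      have h₂ : (j : ℕ) ≤ h p := hji
      have h₃ : (p : ℕ) < j := hij
      omega
    have hi : shiftedLabel m 0 N b (Function.update t p !t p) i = shiftedLabel m 0 N b t i := by
      simp [shiftedLabel, Function.update_of_ne hip]
    have hj : (shiftedLabel m 0 N b (Function.update t p !t p) j).1 =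
        (shiftedLabel m 0 N b t j).1 := by
      by_cases hjp : j = p
      · have : (p : ℕ) < m := by omega
        subst hjp
        simp [shiftedLabel, this]
      · simp [shiftedLabel, Function.update_of_ne hjp]
    rw [epsSuper, hi, hj, ← epsSuper]
  have hcard (t : Fin n → Bool) :
      (-1 : Polynomial ℤ) ^ (Finset.univ.filter fun i => t i = true).card =
        ∏ i, if t i = true then -1 else 1 := by
    rw [Finset.prod_ite, Finset.prod_const, Finset.prod_const_one, mul_one]
  have hsign (t : Fin n → Bool) :
      (∏ i, if Function.update t p (!t p) i = true then (-1 : Polynomial ℤ) else 1) =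
        -∏ i, if t i = true then -1 else 1 := by
    rw [← Finset.mul_prod_erase _ _ (Finset.mem_univ p),
      ← Finset.mul_prod_erase _ _ (Finset.mem_univ p), Function.update_self,
      Finset.prod_congr rfl fun i hi => by
        rw [Function.update_of_ne (Finset.ne_of_mem_erase hi)]]
    cases t p <;> simp
  refine Finset.sum_involution (fun t _ => Function.update t p !t p) ?_ ?_ ?_ ?_
  · intro t _
    rw [hinv, hcard, hcard, hsign]
    ring
  · intro t _ _ ht
    have := congrFun ht p
    simp at this
  · intro t ht
    simp only [Finset.mem_filter, Finset.mem_univ, true_and] at ht ⊢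
    intro i hi
    by_cases hip : i = p
    · subst hip
      omega
    · exact ht i (by rwa [Function.update_of_ne hip] at hi)
  · intro t _
    simp

theorem sum_shiftedLabel_eq_zero {n : ℕ} {h : Fin n → Fin n} (hmono : Monotone h) {m r : ℕ}
    (hm₀ : 1 ≤ m) (hmn : m < n) (hmr : m ≤ r) (hm : ∀ i : Fin n, (i : ℕ) < m → (h i : ℕ) < m)
    (k N : ℕ) {B : Finset (Fin n → ℕ)}
    (hB : ∀ b ∈ B, ∀ σ : Equiv.Perm (Fin n), b ∘ σ ∈ B) :
    ∑ b ∈ B, ∑ t ∈ Finset.univ.filter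
          (fun t : Fin n → Bool => ∀ i, t i = true → (i : ℕ) + 1 ≤ r),
        (-1 : Polynomial ℤ) ^ ((Finset.univ.filter (fun i => t i = true)).card)
          * Polynomial.X ^ invPi h (shiftedLabel m k N b t) = 0 := by
  induction k with
  | zero => exact Finset.sum_eq_zero fun b _ => sum_shiftedLabel_zero hm₀ hmn hmr hm N b
  | succ k ih => exact (sum_shiftedLabel_succ hmono hmr hm k N hB).trans ih

/-- Vanishing of `χ_{π,l}` at a touch point: if there is `i₀` with `1 ≤ i₀ < n`,
`i₀ ≤ n − l`, and `h(j) ≤ i₀` for all `j ≤ i₀` (indices `1`-based), then for every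
label `b₀` the coefficient of the monomial of content `b₀` in `χ_{π,l}[Y;q]`, namely
`∑_{b rearranging b₀} ∑_{t : tᵢ=1 ⇒ i ≤ n−l} (−1)^{|t|} q^{inv_π(b·t)}`,
vanishes in `ℤ[q]`. -/
theorem chi_pi_touch_point_vanishes (n : ℕ) (hn : 1 ≤ n)
    (h : Fin n → Fin n) (hmono : Monotone h) (hge : ∀ i, i ≤ h i)
    (l : ℕ) (hl : l ≤ n)
    (htouch : ∃ i₀ : ℕ, 1 ≤ i₀ ∧ i₀ < n ∧ i₀ ≤ n - l ∧
      ∀ j : Fin n, (j : ℕ) + 1 ≤ i₀ → ((h j : ℕ) + 1 ≤ i₀))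
    (b₀ : Fin n → ℕ) (hb₀ : ∀ i, 1 ≤ b₀ i) :
    ∑ b ∈ Finset.image (fun σ : Equiv.Perm (Fin n) => b₀ ∘ ⇑σ) Finset.univ,
      ∑ t ∈ Finset.univ.filter
          (fun t : Fin n → Bool => ∀ i, t i = true → (i : ℕ) + 1 ≤ n - l),
        (-1 : Polynomial ℤ) ^ ((Finset.univ.filter (fun i => t i = true)).card)
          * Polynomial.X ^ invPi h (superLabel b t) = 0 := by
  obtain ⟨m, hm₀, hmn, hmr, hm⟩ := htouch
  have hm' : ∀ i : Fin n, (i : ℕ) < m → (h i : ℕ) < m := fun i hi => hm i hi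
  have hB : ∀ b ∈ Finset.image (fun σ : Equiv.Perm (Fin n) => b₀ ∘ ⇑σ) Finset.univ,
      ∀ σ : Equiv.Perm (Fin n),
        b ∘ σ ∈ Finset.image (fun σ : Equiv.Perm (Fin n) => b₀ ∘ ⇑σ) Finset.univ := by
    intro b hb σ
    obtain ⟨τ, -, rfl⟩ := Finset.mem_image.1 hb
    exact Finset.mem_image.2 ⟨τ * σ, Finset.mem_univ _, rfl⟩
  have hlabel : ∀ b ∈ Finset.image (fun σ : Equiv.Perm (Fin n) => b₀ ∘ ⇑σ) Finset.univ,
      ∀ t, superLabel b t = shiftedLabel m (Finset.univ.sup b₀) (Finset.univ.sup b₀) b t := by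
    intro b hb t
    obtain ⟨τ, -, rfl⟩ := Finset.mem_image.1 hb
    have hsup : Finset.univ.sup (b₀ ∘ τ) = Finset.univ.sup b₀ := by
      rw [← Finset.sup_image, Finset.image_univ_equiv]
    funext i
    rw [superLabel, shiftedLabel, hsup, ite_self]
  rw [Finset.sum_congr rfl fun b hb => Finset.sum_congr rfl fun t _ => by rw [hlabel b hb t]]
  exact sum_shiftedLabel_eq_zero hmono hm₀ hmn hmr hm' _ _ hB
end
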